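/- In the uniform case, the conditional variance satisfies Var_w(z) = 1/(log w)² + o(1/(log w)²) as w → ∞; equivalently, lim_{w→∞} (log w)²·Var_w(z) = 1. -/

import Mathlib

/-!
With `L = log w` and `d = ubar - u`, the tilted density is that of `u` plus an exponential variable of
rate `L` conditioned to be at most `d`. Its first two moments have elementary antiderivatives
(`integral_exp_neg_mul_aux`, `integral_id_mul_exp_neg_mul`, `integral_sq_mul_exp_neg_mul`), and they
give the exact formula `L² Var = 1 - (d L)² q / (1 - q)²` with `q = exp (-(d L))`
(`sq_mul_variance_eq`). As `L → ∞` the correction tends to zero, since the exponential beats the square.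
-/

open MeasureTheory Real Filter

lemma hasDerivAt_exp_neg_mul_aux (L z : ℝ) :
    HasDerivAt (fun z : ℝ => exp (-z * L)) (exp (-z * L) * (-1 * L)) z :=
  (((hasDerivAt_id z).neg).mul_const L).exp

lemma integral_exp_neg_mul_aux (u v : ℝ) {L : ℝ} (hL : 0 < L) :
    ∫ z in u..v, exp (-z * L) = (exp (-u * L) - exp (-v * L)) / L := by
  rw [intervalIntegral.integral_eq_sub_of_hasDerivAt (f := fun z => -(1 / L) * exp (-z * L))]
  · field_simp
    ring
  · intro z _
    refine ((hasDerivAt_exp_neg_mul_aux L z).const_mul (-(1 / L))).congr_deriv ?_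
    field_simp
  · exact Continuous.intervalIntegrable (by fun_prop) _ _

lemma integral_id_mul_exp_neg_mul (u v : ℝ) {L : ℝ} (hL : 0 < L) :
    ∫ z in u..v, z * exp (-z * L) =
      (u / L + 1 / L ^ 2) * exp (-u * L) - (v / L + 1 / L ^ 2) * exp (-v * L) := by
  rw [intervalIntegral.integral_eq_sub_of_hasDerivAt
    (f := fun z => -(z / L + 1 / L ^ 2) * exp (-z * L))]
  · ring
  · intro z _
    refine HasDerivAt.congr_deriv (((((hasDerivAt_id z).div_const L).add_const (1 / L ^ 2)).neg).mul
      (hasDerivAt_exp_neg_mul_aux L z)) ?_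
    simp
    field_simp
    ring
  · exact Continuous.intervalIntegrable (by fun_prop) _ _

lemma integral_sq_mul_exp_neg_mul (u v : ℝ) {L : ℝ} (hL : 0 < L) :
    ∫ z in u..v, z ^ 2 * exp (-z * L) =
      (u ^ 2 / L + 2 * u / L ^ 2 + 2 / L ^ 3) * exp (-u * L) -
        (v ^ 2 / L + 2 * v / L ^ 2 + 2 / L ^ 3) * exp (-v * L) := by
  rw [intervalIntegral.integral_eq_sub_of_hasDerivAt
    (f := fun z => -(z ^ 2 / L + 2 * z / L ^ 2 + 2 / L ^ 3) * exp (-z * L))]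
  · ring
  · intro z _
    refine HasDerivAt.congr_deriv (((((((hasDerivAt_id z).pow 2).div_const L).add
      (((hasDerivAt_id z).const_mul 2).div_const (L ^ 2))).add_const (2 / L ^ 3)).neg).mul
      (hasDerivAt_exp_neg_mul_aux L z)) ?_
    simp
    field_simp
    ring
  · exact Continuous.intervalIntegrable (by fun_prop) _ _

/-- Under the tilted density the constant height of the uniform density cancels. -/
lemma integral_mul_tilted_uniform {u v : ℝ} (huv : u < v) (L : ℝ) (g : ℝ → ℝ) :
    (∫ z in u..v, g z * (exp (-z * L) * (if u ≤ z ∧ z ≤ v then (v - u)⁻¹ else 0) /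
      (∫ t in u..v, exp (-t * L) * (if u ≤ t ∧ t ≤ v then (v - u)⁻¹ else 0)))) =
    (∫ z in u..v, g z * exp (-z * L)) / ∫ z in u..v, exp (-z * L) := by
  have hd : (v - u)⁻¹ ≠ 0 := inv_ne_zero (sub_pos.2 huv).ne'
  have hD : (∫ t in u..v, exp (-t * L) * (if u ≤ t ∧ t ≤ v then (v - u)⁻¹ else 0)) =
      (∫ z in u..v, exp (-z * L)) * (v - u)⁻¹ := by
    rw [← intervalIntegral.integral_mul_const]
    refine intervalIntegral.integral_congr fun t ht => ?_
    rw [Set.uIcc_of_le huv.le] at ht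
    simp only [if_pos (show u ≤ t ∧ t ≤ v from ht)]
  rw [hD, ← intervalIntegral.integral_div]
  refine intervalIntegral.integral_congr fun t ht => ?_
  rw [Set.uIcc_of_le huv.le] at ht
  simp only [if_pos (show u ≤ t ∧ t ≤ v from ht)]
  rw [mul_div_mul_right _ _ hd, mul_div_assoc]

/-- The exact variance of the tilted uniform law, i.e. of a truncated exponential of rate `L`. -/
lemma sq_mul_variance_eq {u v L : ℝ} (huv : u < v) (hL : 0 < L) :
    L ^ 2 * ((∫ z in u..v, z ^ 2 * exp (-z * L)) / (∫ z in u..v, exp (-z * L)) -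
      ((∫ z in u..v, z * exp (-z * L)) / ∫ z in u..v, exp (-z * L)) ^ 2) =
    1 - ((v - u) * L) ^ 2 * exp (-((v - u) * L)) / (1 - exp (-((v - u) * L))) ^ 2 := by
  rw [integral_exp_neg_mul_aux u v hL, integral_id_mul_exp_neg_mul u v hL,
    integral_sq_mul_exp_neg_mul u v hL]
  have hb : exp (-v * L) = exp (-u * L) * exp (-((v - u) * L)) := by
    rw [← exp_add]
    congr 1
    ring
  have hq : exp (-((v - u) * L)) < 1 := by
    rw [exp_lt_one_iff]
    have := mul_pos (sub_pos.2 huv) hL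
    linarith
  rw [hb]
  have ha : exp (-u * L) ≠ 0 := (exp_pos _).ne'
  generalize exp (-((v - u) * L)) = q at hq ⊢
  generalize exp (-u * L) = a at ha ⊢
  have hq' : 1 - q ≠ 0 := (sub_pos.2 hq).ne'
  have hs : a - a * q = a * (1 - q) := by ring
  rw [hs]
  field_simp
  ring

/-- Corollary 1 of the paper (variance asymptotics): in the uniform case,
`Var_w(z) = 1/(log w)² + o(1/(log w)²)` as `w → ∞`; equivalently
`lim_{w→∞} (log w)²·Var_w(z) = 1`. -/
theorem tail_index_uniform_conditional_variance_asymptotics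
    (u ubar : ℝ) (h0u : 0 < u) (huu : u < ubar) :
    let f : ℝ → ℝ := fun z => if u ≤ z ∧ z ≤ ubar then (ubar - u)⁻¹ else 0
    Filter.Tendsto
      (fun w : ℝ =>
        (Real.log w) ^ 2 *
          ((∫ z in u..ubar,
              z ^ 2 * (Real.exp (-z * Real.log w) * f z /
                (∫ t in u..ubar, Real.exp (-t * Real.log w) * f t))) -
            (∫ z in u..ubar,
              z * (Real.exp (-z * Real.log w) * f z /
                (∫ t in u..ubar, Real.exp (-t * Real.log w) * f t))) ^ 2))
      Filter.atTop (nhds 1) := by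
  intro f
  have hx : Tendsto (fun w : ℝ => (ubar - u) * log w) atTop atTop :=
    tendsto_log_atTop.const_mul_atTop (sub_pos.2 huu)
  have hlim : Tendsto (fun x : ℝ => 1 - x ^ 2 * exp (-x) / (1 - exp (-x)) ^ 2) atTop (nhds 1) := by
    have h1 := tendsto_pow_mul_exp_neg_atTop_nhds_zero 2
    have h2 : Tendsto (fun x : ℝ => (1 - exp (-x)) ^ 2) atTop (nhds ((1 - 0) ^ 2)) :=
      (tendsto_exp_neg_atTop_nhds_zero.const_sub 1).pow 2
    simpa using (h1.div h2 (by norm_num)).const_sub 1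
  refine (hlim.comp hx).congr' ?_
  filter_upwards [eventually_gt_atTop 1] with w hw
  have h2 := integral_mul_tilted_uniform huu (log w) (fun z => z ^ 2)
  have h1 := integral_mul_tilted_uniform huu (log w) (fun z => z)
  simp only [f, Function.comp_apply]
  rw [h2, h1, sq_mul_variance_eq huu (log_pos hw)]
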